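/- For every even m ≥ 2 and n ≥ 2, the topological complexity of C_n(ℝ^m) equals either 2n − 2 or 2n − 1. -/

import Mathlib

/-- The space of continuous paths `[0,1] → X`, with the compact-open topology. -/
abbrev PathSpace (X : Type*) [TopologicalSpace X] := C(unitInterval, X)

/-- `U ⊆ X × X` admits a continuous section of the path fibration
`π : PX → X × X`, `π(γ) = (γ 0, γ 1)`. -/
def HasMotionPlanningSection (X : Type*) [TopologicalSpace X] (U : Set (X × X)) : Prop :=
  ∃ s : C(U, PathSpace X), ∀ p : U, s p 0 = (p : X × X).1 ∧ s p 1 = (p : X × X).2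

/-- `X × X` can be covered by `k` open sets, over each of which the path
fibration admits a continuous section. -/
def HasTCCover (X : Type*) [TopologicalSpace X] (k : ℕ) : Prop :=
  ∃ U : Fin k → Set (X × X), (∀ i, IsOpen (U i)) ∧ (⋃ i, U i) = Set.univ ∧
    ∀ i, HasMotionPlanningSection X (U i)

/-- The topological complexity of `X` (in the unnormalized convention of Farber,
so that `TopComplexity(point) = 1`), as an extended natural number. -/
noncomputable def TopComplexity (X : Type*) [TopologicalSpace X] : ℕ∞ :=
  sInf {N : ℕ∞ | ∃ k : ℕ, N = k ∧ HasTCCover X k}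

/-- The configuration space of `n` ordered distinct points in `ℝ^m`. -/
abbrev ConfSpace (n m : ℕ) := {f : Fin n → (Fin m → ℝ) // Function.Injective f}

/-!
Lower bound: consider pairs of configurations of `n` points in which the points orbit one another at
distinct radii, in directions given by `2n - 3` unit vectors. A motion planning section over an open
set deforms, for each of these vectors, the corresponding difference of two points into a vector
which, the radii being distinct, does not have a certain prescribed direction. If `2n - 3` open sets
covered all pairs, each set could serve one of the vectors: cutting the deformations off by a bump
covering and applying Brouwer's fixed point theorem to all of them at once, some deformation would
be complete and end in the direction it avoids. Brouwer's theorem itself holds because the integral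
of `det (1 + Dg)` over a ball, for `g` vanishing on the boundary, is the volume of the ball, while
this determinant would vanish if `1 + g` were a retraction to the sphere.

Upper bound: write `E ≃ F × ℝ` and let the vertical order of a configuration record which points lie
above one another on a common vertical line. The configurations whose vertical order is contained
in a given one can be contracted, by first moving every point to a height of its own. On pairs, the
strata with the same total number of points that are not lowest on their line are separated from
each other, and the `2n - 1` possible totals give `2n - 1` open sets.
-/

section Brouwer

open MeasureTheory Metric Set

section ChangeOfVariables

theorem image_eq_of_bijective_of_eqOn_compl {α : Type*} {f : α → α} (hf : Function.Bijective f)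
    {s : Set α} (h : EqOn f id sᶜ) : f '' s = s := by
  rw [← compl_inj_iff, ← image_compl_eq hf, h.image_eq, image_id]

variable {V : Type*} [NormedAddCommGroup V] [NormedSpace ℝ V]

theorem det_one_add_pos [FiniteDimensional ℝ V] {A : V →L[ℝ] V} (hA : ‖A‖ < 1) :
    0 < (1 + A).det := by
  have hne : ∀ s ∈ Icc (0 : ℝ) 1, (1 + s • A).det ≠ 0 := by
    intro s hs
    have hsA : ‖-(s • A)‖ < 1 := by
      rw [norm_neg, norm_smul, Real.norm_of_nonneg hs.1]
      exact (mul_le_of_le_one_left (norm_nonneg A) hs.2).trans_lt hA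
    have hunit : IsUnit (1 + s • A) := by
      simpa only [sub_neg_eq_add] using isUnit_one_sub_of_norm_lt_one hsA
    exact ((hunit.map ContinuousLinearMap.toLinearMapRingHom).map LinearMap.det).ne_zero
  by_contra! hle
  have hcont : Continuous fun s : ℝ => (1 + s • A).det :=
    ContinuousLinearMap.continuous_det.comp (by fun_prop)
  obtain ⟨s, hs, h0⟩ := intermediate_value_Icc' zero_le_one hcont.continuousOn
    (show (0 : ℝ) ∈ _ from ⟨by simpa using hle, by simp [ContinuousLinearMap.det]⟩)
  exact hne s hs h0

theorem bijective_id_add_of_lipschitzWith {G : Type*} [NormedAddCommGroup G] [CompleteSpace G]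
    {h : G → G} {c : NNReal} (hh : LipschitzWith c h) (hc : c < 1) :
    Function.Bijective fun x => x + h x := by
  refine (Function.bijective_iff_existsUnique _).2 fun y => ?_
  have hcontr : ContractingWith c fun x => y - h x :=
    ⟨hc, by simpa using (LipschitzWith.const y).sub hh⟩
  refine ⟨hcontr.fixedPoint, ?_, fun x hx => hcontr.fixedPoint_unique ?_⟩
  · exact eq_sub_iff_add_eq.1 hcontr.fixedPoint_isFixedPt.eq.symm
  · exact sub_eq_of_eq_add hx.symm

variable [FiniteDimensional ℝ V] [MeasurableSpace V] [BorelSpace V]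
  (μ : Measure V) [μ.IsAddHaarMeasure] {g : V → V} {K : NNReal} {s : Set V}

theorem setIntegral_det_one_add_fderiv_of_lt_one (hs : MeasurableSet s) (hg : LipschitzWith K g)
    (hK : K < 1) (hgs : EqOn g 0 sᶜ) (hd : ∀ x ∈ s, DifferentiableAt ℝ g x) :
    ∫ x in s, (1 + fderiv ℝ g x).det ∂μ = μ.real s := by
  have hbij := bijective_id_add_of_lipschitzWith hg hK
  have himage : (fun x => x + g x) '' s = s :=
    image_eq_of_bijective_of_eqOn_compl hbij fun x hx => by simp [hgs hx]
  have hderiv : ∀ x ∈ s, HasFDerivWithinAt (fun x => x + g x) (1 + fderiv ℝ g x) s x :=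
    fun x hx => ((hasFDerivAt_id x).add (hd x hx).hasFDerivAt).hasFDerivWithinAt
  have hpos : ∀ x, 0 < (1 + fderiv ℝ g x).det := fun x =>
    det_one_add_pos ((norm_fderiv_le_of_lipschitz ℝ hg).trans_lt hK)
  have hcv := integral_image_eq_integral_abs_det_fderiv_smul μ hs hderiv hbij.injective.injOn
    fun _ => (1 : ℝ)
  simpa [himage, abs_of_pos (hpos _)] using hcv.symm

end ChangeOfVariables

section Interpolation

variable {V : Type*} [NormedAddCommGroup V] [NormedSpace ℝ V] [FiniteDimensional ℝ V]

theorem exists_polynomial_eval_eq_det_one_add_smul (A : V →L[ℝ] V) :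
    ∃ p : Polynomial ℝ, p.natDegree ≤ Module.finrank ℝ V ∧
      ∀ t : ℝ, p.eval t = (1 + t • A).det := by
  let b := Module.finBasis ℝ V
  let M := LinearMap.toMatrix b b (A : V →ₗ[ℝ] V)
  let P : Matrix (Fin (Module.finrank ℝ V)) (Fin (Module.finrank ℝ V)) (Polynomial ℝ) :=
    (Polynomial.X : Polynomial ℝ) • M.map Polynomial.C + (1 : Matrix _ _ ℝ).map Polynomial.C
  refine ⟨P.det, by simpa [P] using Polynomial.natDegree_det_X_add_C_le M 1, fun t => ?_⟩
  have hM : LinearMap.toMatrix b b ((1 + t • A : V →L[ℝ] V) : V →ₗ[ℝ] V) = 1 + t • M := by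
    rw [← LinearMap.toMatrix_one b, ← map_smul, ← map_add]
    rfl
  rw [← Polynomial.coe_evalRingHom, RingHom.map_det, ContinuousLinearMap.det,
    ← LinearMap.det_toMatrix b, hM]
  congr 1
  ext i j
  rcases eq_or_ne i j with rfl | hij
  · simp [P, add_comm, mul_comm t]
  · simp [P, hij, mul_comm t]

theorem exists_eval_eq_sum_weights {F : Type*} [Field F] {S : Set F} (hS : S.Infinite) (N : ℕ)
    (a : F) : ∃ (s : Finset F) (w : F → F), ↑s ⊆ S ∧
      ∀ p : Polynomial F, p.natDegree ≤ N → p.eval a = ∑ t ∈ s, w t * p.eval t := by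
  classical
  obtain ⟨s, hsS, hcard⟩ := hS.exists_subset_card_eq (N + 1)
  refine ⟨s, fun t => (Lagrange.basis s id t).eval a, hsS, fun p hp => ?_⟩
  have hdeg : p.degree < s.card := by
    rw [hcard]
    exact Polynomial.degree_le_natDegree.trans_lt (by exact_mod_cast Nat.lt_succ_of_le hp)
  conv_lhs => rw [Lagrange.eq_interpolate (injOn_id _) hdeg, Lagrange.interpolate_apply]
  simp [Polynomial.eval_finsetSum, mul_comm]

theorem exists_det_one_add_eq_sum_weights {S : Set ℝ} (hS : S.Infinite) :
    ∃ (s : Finset ℝ) (w : ℝ → ℝ), ↑s ⊆ S ∧ ∑ t ∈ s, w t = 1 ∧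
      ∀ A : V →L[ℝ] V, (1 + A).det = ∑ t ∈ s, w t * (1 + t • A).det := by
  obtain ⟨s, w, hsS, hw⟩ := exists_eval_eq_sum_weights hS (Module.finrank ℝ V) 1
  refine ⟨s, w, hsS, by simpa using (hw 1 (by simp)).symm, fun A => ?_⟩
  obtain ⟨p, hp, hpe⟩ := exists_polynomial_eval_eq_det_one_add_smul A
  simpa only [hpe, one_smul] using hw p hp

variable [MeasurableSpace V] [BorelSpace V] (μ : Measure V) {g : V → V} {K : NNReal} {s : Set V}

theorem integrableOn_det_one_add_fderiv (hs : μ s ≠ ⊤) (hg : LipschitzWith K g) :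
    IntegrableOn (fun x => (1 + fderiv ℝ g x).det) s μ := by
  have hmeas : Measurable fun x => (1 + fderiv ℝ g x).det :=
    ContinuousLinearMap.continuous_det.measurable.comp ((measurable_fderiv ℝ g).const_add 1)
  obtain ⟨C, hC⟩ := ((isCompact_closedBall (0 : V →L[ℝ] V) K).image
    (f := fun A => (1 + A).det)
    (ContinuousLinearMap.continuous_det.comp (by fun_prop))).isBounded.exists_norm_le
  exact Measure.integrableOn_of_bounded hs hmeas.aestronglyMeasurable
    (ae_of_all _ fun x => hC _ ⟨fderiv ℝ g x, by simpa using norm_fderiv_le_of_lipschitz ℝ hg, rfl⟩)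

theorem setIntegral_det_one_add_fderiv [μ.IsAddHaarMeasure] (hs : MeasurableSet s)
    (hμs : μ s ≠ ⊤) (hg : LipschitzWith K g) (hgs : EqOn g 0 sᶜ)
    (hd : ∀ x ∈ s, DifferentiableAt ℝ g x) :
    ∫ x in s, (1 + fderiv ℝ g x).det ∂μ = μ.real s := by
  -- The determinant is a polynomial in the scaling `t` of `g`, so its value at `t = 1` is a fixed
  -- linear combination of values at small `t`, where `x + t • g x` is bijective.
  have hinf : (Ioo 0 ((K : ℝ) + 1)⁻¹).Infinite := Ioo_infinite (by positivity)
  obtain ⟨T, w, hT, hw, hdet⟩ := exists_det_one_add_eq_sum_weights (V := V) hinf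
  have hlip : ∀ t : ℝ, LipschitzWith (‖t‖₊ * K) (t • g) := fun t =>
    (lipschitzWith_smul t).comp hg
  have hsmul : ∀ t ∈ T, ∫ x in s, (1 + t • fderiv ℝ g x).det ∂μ = μ.real s := by
    intro t ht
    have htK : ‖t‖₊ * K < 1 := by
      rw [← NNReal.coe_lt_coe, NNReal.coe_mul, coe_nnnorm, Real.norm_of_nonneg (hT ht).1.le]
      have hlt := (lt_inv_mul_iff₀ (by positivity : (0 : ℝ) < K + 1)).1
        ((hT ht).2.trans_eq (mul_one _).symm)
      simp only [NNReal.coe_one]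
      linarith [(hT ht).1]
    simpa only [fderiv_const_smul_field, Pi.smul_apply] using
      setIntegral_det_one_add_fderiv_of_lt_one μ hs (hlip t) htK
        (fun x hx => by simp [hgs hx]) fun x hx => (hd x hx).const_smul t
  have hint : ∀ t ∈ T, IntegrableOn (fun x => w t * (1 + t • fderiv ℝ g x).det) s μ := by
    intro t _
    simpa only [fderiv_const_smul_field, Pi.smul_apply, IntegrableOn] using
      (integrableOn_det_one_add_fderiv μ hμs (hlip t)).const_mul (w t)
  calc ∫ x in s, (1 + fderiv ℝ g x).det ∂μ
      = ∑ t ∈ T, w t * ∫ x in s, (1 + t • fderiv ℝ g x).det ∂μ := by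
        rw [funext fun x => hdet (fderiv ℝ g x), integral_finsetSum _ hint]
        simp only [integral_const_mul]
    _ = μ.real s := by rw [Finset.sum_congr rfl fun t ht => by rw [hsmul t ht], ← Finset.sum_mul,
        hw, one_mul]

end Interpolation

section Lipschitz

variable {V W : Type*} [SeminormedAddCommGroup V] [NormedSpace ℝ V]

theorem exists_mem_segment_mem_frontier {s : Set V} {x y : V} (hx : x ∈ s) (hy : y ∉ s) :
    ∃ z ∈ segment ℝ x y, z ∈ frontier s := by
  by_contra! h
  have hsub : segment ℝ x y ⊆ interior s ∪ (closure s)ᶜ := by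
    intro z hz
    by_contra hzn
    simp only [mem_union, mem_compl_iff, not_or, not_not] at hzn
    exact h z hz ⟨hzn.2, hzn.1⟩
  obtain ⟨z, -, hz, hz'⟩ := (convex_segment x y).isPreconnected _ _ isOpen_interior
    isClosed_closure.isOpen_compl hsub
    ⟨x, left_mem_segment ℝ x y, (hsub (left_mem_segment ℝ x y)).resolve_right
      (not_not.2 (subset_closure hx))⟩
    ⟨y, right_mem_segment ℝ x y, (hsub (right_mem_segment ℝ x y)).resolve_left
      fun hy' => hy (interior_subset hy')⟩
  exact hz' (interior_subset_closure hz)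

variable [SeminormedAddCommGroup W]

theorem lipschitzWith_indicator {s : Set V} (hs : IsClosed s) {f : V → W} {K : NNReal}
    (hf : LipschitzOnWith K f s) (h0 : EqOn f 0 (frontier s)) :
    LipschitzWith K (s.indicator f) := by
  have hmixed : ∀ {x y}, x ∈ s → y ∉ s →
      dist (s.indicator f x) (s.indicator f y) ≤ K * dist x y := by
    intro x y hx hy
    obtain ⟨z, hz, hzs⟩ := exists_mem_segment_mem_frontier hx hy
    have hxz : dist x z ≤ dist x y := by
      linarith [dist_add_dist_of_mem_segment hz, dist_nonneg (x := z) (y := y)]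
    calc dist (s.indicator f x) (s.indicator f y) = dist (f x) (f z) := by
          rw [indicator_of_mem hx, indicator_of_notMem hy, h0 hzs, Pi.zero_apply]
      _ ≤ K * dist x z := hf.dist_le_mul x hx z (hs.frontier_subset hzs)
      _ ≤ K * dist x y := by gcongr
  refine LipschitzWith.of_dist_le_mul fun x y => ?_
  by_cases hx : x ∈ s <;> by_cases hy : y ∈ s
  · simpa only [indicator_of_mem hx, indicator_of_mem hy] using hf.dist_le_mul x hx y hy
  · exact hmixed hx hy
  · rw [dist_comm, dist_comm x]
    exact hmixed hy hx
  · rw [indicator_of_notMem hx, indicator_of_notMem hy, dist_self]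
    positivity

end Lipschitz

section NoRetraction

variable {V : Type*} [NormedAddCommGroup V] [InnerProductSpace ℝ V] [FiniteDimensional ℝ V]

theorem det_fderiv_eq_zero_of_norm_eq_const {u : V → V} {r : ℝ} (hr : r ≠ 0)
    (hu : ∀ x, ‖u x‖ = r) {x : V} (hd : DifferentiableAt ℝ u x) : (fderiv ℝ u x).det = 0 := by
  by_contra hdet
  let e := LinearMap.equivOfDetNeZero ((fderiv ℝ u x : V →L[ℝ] V) : V →ₗ[ℝ] V) hdet
  have hv : fderiv ℝ u x (e.symm (u x)) = u x := e.apply_symm_apply (u x)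
  have hconst : HasFDerivAt (fun y => inner ℝ (u y) (u y)) (0 : V →L[ℝ] ℝ) x := by
    simp only [real_inner_self_eq_norm_sq, hu]
    exact hasFDerivAt_const _ _
  have hzero := DFunLike.congr_fun ((hd.hasFDerivAt.inner ℝ hd.hasFDerivAt).unique hconst)
    (e.symm (u x))
  simp [fderivInnerCLM_apply, hv, hu, hr] at hzero

theorem not_forall_norm_eq_of_contDiff {u : V → V} (hu : ContDiff ℝ 1 u) {r : ℝ} (hr : 0 < r)
    (hid : ∀ x, ‖x‖ = r → u x = x) : ¬ ∀ x, ‖u x‖ = r := by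
  intro hnorm
  borelize V
  have hdu : Differentiable ℝ u := hu.differentiable one_ne_zero
  obtain ⟨K, hK⟩ := (hu.sub contDiff_id).contDiffOn.exists_lipschitzOnWith one_ne_zero
    (convex_closedBall 0 r) (isCompact_closedBall 0 r)
  set g : V → V := (closedBall 0 r).indicator (u - id)
  have hg0 : EqOn g 0 (ball 0 r)ᶜ := by
    intro x hx
    by_cases hxr : x ∈ closedBall 0 r
    · have hxr' : ‖x‖ = r := le_antisymm (by simpa using hxr) (by simpa using hx)
      simp [g, indicator_of_mem hxr, hid x hxr']
    · exact indicator_of_notMem hxr _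
  have hg : LipschitzWith K g := lipschitzWith_indicator isClosed_closedBall hK fun x hx => by
    rw [frontier_closedBall _ hr.ne'] at hx
    simp [hid x (by simpa using hx)]
  have hgu : ∀ x ∈ ball (0 : V) r, HasFDerivAt g (fderiv ℝ u x - 1) x := fun x hx =>
    ((hdu x).hasFDerivAt.sub (hasFDerivAt_id x)).congr_of_eventuallyEq <|
      ((eqOn_indicator.mono ball_subset_closedBall).eventuallyEq_of_mem (isOpen_ball.mem_nhds hx))
  have hint := setIntegral_det_one_add_fderiv volume measurableSet_ball measure_ball_lt_top.ne hg
    hg0 fun x hx => (hgu x hx).differentiableAt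
  have hdet : ∀ x ∈ ball (0 : V) r, (1 + fderiv ℝ g x).det = 0 := fun x hx => by
    rw [(hgu x hx).fderiv, add_sub_cancel]
    exact det_fderiv_eq_zero_of_norm_eq_const hr.ne' hnorm (hdu x)
  rw [setIntegral_congr_fun measurableSet_ball hdet, integral_zero] at hint
  exact (ENNReal.toReal_pos (measure_ball_pos _ _ hr).ne' measure_ball_lt_top.ne).ne hint

theorem exists_eq_zero_of_contDiff_of_eqOn_id {f : V → V} (hf : ContDiff ℝ 1 f) {r : ℝ}
    (hr : 0 < r) (hid : ∀ x, ‖x‖ = r → f x = x) : ∃ x, f x = 0 := by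
  by_contra! hne
  have hne' : ∀ x, ‖f x‖ ≠ 0 := fun x => norm_ne_zero_iff.2 (hne x)
  refine not_forall_norm_eq_of_contDiff (u := fun x => (r * ‖f x‖⁻¹) • f x)
    ((contDiff_const.mul ((hf.norm ℝ hne).inv hne')).smul hf) hr (fun x hx => ?_) fun x => ?_
  · rw [hid x hx, hx, mul_inv_cancel₀ hr.ne', one_smul]
  · rw [norm_smul, norm_mul, norm_inv, norm_norm, Real.norm_of_nonneg hr.le,
      inv_mul_cancel_right₀ (hne' x)]

theorem exists_eq_zero_of_continuous_of_eqOn_id {f : V → V} (hf : Continuous f) {r : ℝ}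
    (hid : ∀ x, r ≤ ‖x‖ → f x = x) : ∃ x, f x = 0 := by
  by_contra! hne
  have hfar : {x : V | r < ‖x‖} ∈ nhdsSet {x : V | max r 0 + 1 ≤ ‖x‖} :=
    (isOpen_lt continuous_const continuous_norm).mem_nhdsSet.2 fun x hx => by
      have := le_max_left r 0
      simp only [mem_ofPred_eq] at hx ⊢
      linarith
  obtain ⟨g, hg, hgf, hgid, -⟩ := hf.exists_contDiff_approx_and_eqOn 1 hf.norm
    (fun x => norm_pos_iff.2 (hne x)) (isClosed_le continuous_const continuous_norm) hfar
    (contDiff_id.contDiffOn.congr fun x hx => hid x (le_of_lt hx))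
  obtain ⟨x, hx⟩ := exists_eq_zero_of_contDiff_of_eqOn_id hg (r := max r 0 + 1) (by positivity)
    fun x hx => by
      rw [hgid hx.ge, hid x]
      linarith [le_max_left r 0]
  simpa [hx] using hgf x

end NoRetraction

/-- **Brouwer's fixed point theorem** for bounded maps. -/
theorem exists_fixedPoint_of_norm_le {W : Type*} [NormedAddCommGroup W] [NormedSpace ℝ W]
    [FiniteDimensional ℝ W] {Φ : W → W} (hΦ : Continuous Φ) {M : ℝ} (hM : ∀ x, ‖Φ x‖ ≤ M) :
    ∃ x, Φ x = x := by
  let e : W ≃L[ℝ] EuclideanSpace ℝ (Fin (Module.finrank ℝ W)) :=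
    ContinuousLinearEquiv.ofFinrankEq (by simp)
  have hcpt : IsCompact (e '' closedBall 0 M) := (isCompact_closedBall _ _).image e.continuous
  obtain ⟨R, hR⟩ := hcpt.isBounded.exists_norm_le
  let χ : EuclideanSpace ℝ (Fin (Module.finrank ℝ W)) → ℝ := fun y => max 0 (min 1 (R + 1 - ‖y‖))
  obtain ⟨y, hy⟩ := exists_eq_zero_of_continuous_of_eqOn_id
    (f := fun y => y - χ y • e (Φ (e.symm y))) (r := R + 1) (by fun_prop) fun y hy => by
      have hχ : χ y = 0 := max_eq_left (min_le_of_right_le (by linarith))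
      simp [hχ]
  have hle : ∀ y, ‖e (Φ (e.symm y))‖ ≤ R := fun y => hR _ ⟨_, by simpa using hM _, rfl⟩
  have hχ1 : χ y ≤ 1 := max_le zero_le_one (min_le_left _ _)
  have hyR : ‖y‖ ≤ R := by
    rw [sub_eq_zero.1 hy, norm_smul, Real.norm_of_nonneg (le_max_left _ _)]
    exact (mul_le_of_le_one_left (norm_nonneg _) hχ1).trans (hle y)
  have hχy : χ y = 1 := by
    simp only [χ]
    rw [min_eq_left (by linarith), max_eq_right zero_le_one]
  exact ⟨e.symm y, e.injective (by simpa [hχy] using (sub_eq_zero.1 hy).symm)⟩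

end Brouwer
/-- The space of injective families `ι → E`, that is, of configurations of distinct points of `E`
labelled by `ι`. `ConfSpace n m` is the case `ι = Fin n`, `E = Fin m → ℝ`. -/
abbrev OrderedConf (ι E : Type*) := {f : ι → E // Function.Injective f}

section LowerBound

open Set Metric
open scoped unitInterval

theorem isOpen_setOf_injective {ι E : Type*} [Finite ι] [TopologicalSpace E] [T2Space E] :
    IsOpen {f : ι → E | Function.Injective f} := by
  have h : {f : ι → E | Function.Injective f} = ⋂ p : {p : ι × ι // p.1 ≠ p.2},
      {f | f p.1.1 ≠ f p.1.2} := by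
    ext f
    simp only [mem_ofPred_eq, mem_iInter, Subtype.forall, Prod.forall]
    exact ⟨fun hf i j => hf.ne, fun hf i j hij => by_contra fun hne => hf i j hne hij⟩
  rw [h]
  exact isOpen_iInter_of_finite fun p => isOpen_ne_fun (continuous_apply _) (continuous_apply _)

variable {E : Type*} [NormedAddCommGroup E] [NormedSpace ℝ E]

section Deformation

theorem continuous_of_continuousOn_of_eqOn_compl {X Y : Type*} [TopologicalSpace X]
    [TopologicalSpace Y] {O T : Set X} {w a : X → Y} (hO : IsOpen O) (hw : ContinuousOn w O)
    (hT : IsClosed T) (hTO : T ⊆ O) (ha : Continuous a) (hwa : EqOn w a Tᶜ) : Continuous w := by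
  refine continuous_iff_continuousAt.2 fun x => ?_
  by_cases hx : x ∈ O
  · exact hw.continuousAt (hO.mem_nhds hx)
  · refine ha.continuousAt.congr (hwa.symm.eventuallyEq_of_mem ?_)
    exact hT.isOpen_compl.mem_nhds fun h => hx (hTO h)

theorem norm_div_norm_smul_pos_smul {c : ℝ} (hc : 0 < c) (a : E) :
    (‖a‖ / ‖c • a‖) • c • a = a := by
  rcases eq_or_ne a 0 with rfl | ha
  · simp
  · have ha' : ‖a‖ ≠ 0 := norm_ne_zero_iff.2 ha
    have hscalar : ‖a‖ / (c * ‖a‖) * c = 1 := by field_simp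
    rw [norm_smul, Real.norm_of_nonneg hc.le, smul_smul, hscalar, one_smul]

theorem exists_continuous_norm_eq_of_homotopy {X : Type*} [TopologicalSpace X] {O : Set X}
    (hO : IsOpen O) {f : C(X, ℝ)} (hf : ∀ x, f x ∈ I) (hfO : tsupport f ⊆ O) {a : C(X, E)}
    {H : C(O × I, E)} (hH : ∀ q, H q ≠ 0) (hH0 : ∀ x, ∃ c > (0 : ℝ), H (x, 0) = c • a x) :
    ∃ w : C(X, E), (∀ x, ‖w x‖ = ‖a x‖) ∧ (∀ x ∉ tsupport f, w x = a x) ∧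
      ∀ x : O, f x = 1 → ∃ c > (0 : ℝ), H (x, 1) = c • w x := by
  classical
  set v : O → E := fun x => H (x, ⟨f x, hf x⟩)
  set w : X → E := fun x => if hx : x ∈ O then (‖a x‖ / ‖v ⟨x, hx⟩‖) • v ⟨x, hx⟩ else a x
  have hv : ∀ x, ‖v x‖ ≠ 0 := fun x => norm_ne_zero_iff.2 (hH _)
  have hwO : ∀ x : O, w x = (‖a x‖ / ‖v x‖) • v x := fun x => dif_pos x.2
  have hwa : ∀ x ∉ tsupport f, w x = a x := by
    intro x hx
    by_cases hxO : x ∈ O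
    · obtain ⟨c, hc, hcx⟩ := hH0 ⟨x, hxO⟩
      have hvx : v ⟨x, hxO⟩ = c • a x := by
        rw [← hcx]
        exact congrArg (fun t => H (_, t))
          (Subtype.ext (image_eq_zero_of_notMem_tsupport (f := f) hx))
      rw [hwO ⟨x, hxO⟩, hvx, norm_div_norm_smul_pos_smul hc]
    · exact dif_neg hxO
  have hvc : Continuous v := by fun_prop
  have hwc : ContinuousOn w O := by
    rw [continuousOn_iff_continuous_domRestrict, show O.domRestrict w = _ from funext hwO]
    exact ((a.continuous.comp continuous_subtype_val).norm.div hvc.norm hv).smul hvc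
  have hw : Continuous w := continuous_of_continuousOn_of_eqOn_compl hO hwc
    (isClosed_tsupport f) hfO a.continuous hwa
  refine ⟨⟨w, hw⟩, fun x => ?_, hwa, fun x hx => ?_⟩
  · by_cases hxO : x ∈ O
    · rw [ContinuousMap.coe_mk, hwO ⟨x, hxO⟩, norm_smul, norm_div, norm_norm, norm_norm,
        div_mul_cancel₀ _ (hv _)]
    · exact congrArg norm (dif_neg hxO)
  · obtain ⟨c, -, hcx⟩ := hH0 x
    have hax : 0 < ‖a x‖ := norm_pos_iff.2 fun h => hH (x, 0) (by rw [hcx, h, smul_zero])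
    have hvx : v x = H (x, 1) := congrArg (fun t => H (x, t)) (Subtype.ext hx)
    refine ⟨‖v x‖ / ‖a x‖, div_pos ((norm_nonneg _).lt_of_ne' (hv x)) hax, ?_⟩
    change H (x, 1) = _ • w x
    rw [hwO, smul_smul, div_mul_div_cancel₀ hax.ne', div_self (hv x),
      one_smul, hvx]

theorem exists_homotopy_end_eq_pos_smul [FiniteDimensional ℝ E] {J : Type*} [Finite J]
    {O : J → Set (J → E)} (hO : ∀ j, IsOpen (O j)) (hcov : {z | ∀ j, ‖z j‖ = 1} ⊆ ⋃ j, O j)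
    {H : ∀ j, C(O j × I, E)} (hH : ∀ j q, H j q ≠ 0)
    (hH0 : ∀ j (z : O j), ∃ c > (0 : ℝ), H j (z, 0) = c • (z : J → E) j)
    {τ : (J → E) → J → E} (hτ : Continuous τ) (hτ1 : ∀ z j, ‖τ z j‖ ≤ 1)
    (hτnorm : ∀ z, (∀ j, ‖τ z j‖ = ‖z j‖) → ∀ j, ‖z j‖ = 1) :
    ∃ j, ∃ z : O j, (∀ i, ‖(z : J → E) i‖ = 1) ∧ ∃ c > (0 : ℝ), H j (z, 1) = c • τ z j := by
  have := Fintype.ofFinite J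
  have hclosed : IsClosed {z : J → E | ∀ j, ‖z j‖ = 1} := by
    rw [ofPred_forall]
    exact isClosed_iInter fun j => isClosed_eq (continuous_apply j).norm continuous_const
  have hcov' : {z : J → E | ∀ j, ‖z j‖ = 1} ⊆ ⋃ j, O j ∩ ball 0 2 := by
    intro z hz
    rw [← iUnion_inter, mem_inter_iff, mem_ball_zero_iff]
    exact ⟨hcov hz, ((pi_norm_le_iff_of_nonneg zero_le_one).2 fun j => (hz j).le).trans_lt
      one_lt_two⟩
  obtain ⟨f, hf⟩ := BumpCovering.exists_isSubordinate_of_locallyFinite hclosed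
    (fun j => O j ∩ ball 0 2) (fun j => (hO j).inter isOpen_ball) (locallyFinite_of_finite _) hcov'
  choose w hwnorm hwa hw1 using fun j => exists_continuous_norm_eq_of_homotopy (hO j)
    (f := f j) (fun z => ⟨f.nonneg j z, f.le_one j z⟩) ((hf j).trans inter_subset_left)
    (a := ContinuousMap.eval j) (hH j) (hH0 j)
  have hbound : ∀ z j, ‖z j - w j z‖ ≤ 4 := by
    intro z j
    by_cases hz : z ∈ tsupport (f j)
    · have hzj : ‖z j‖ ≤ 2 := (norm_le_pi_norm z j).trans (mem_ball_zero_iff.1 (hf j hz).2).le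
      have hwj : ‖w j z‖ ≤ 2 := (hwnorm j z).trans_le hzj
      linarith [norm_sub_le (z j) (w j z)]
    · rw [hwa j z hz, ContinuousMap.eval_apply, sub_self, norm_zero]
      norm_num
  -- At a fixed point of `Φ` the deformed vectors `w j z` are the targets `τ z j`.
  obtain ⟨z, hz⟩ := exists_fixedPoint_of_norm_le (Φ := fun z j => z j - w j z + τ z j) (M := 5)
    (by fun_prop) fun z => (pi_norm_le_iff_of_nonneg (by norm_num)).2 fun j => by
      linarith [norm_add_le (z j - w j z) (τ z j), hbound z j, hτ1 z j]
  have hwτ : ∀ j, w j z = τ z j := fun j => by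
    have hzj := congrFun hz j
    rw [sub_add_eq_add_sub, sub_eq_iff_eq_add] at hzj
    exact (add_left_cancel hzj).symm
  have hz1 : ∀ j, ‖z j‖ = 1 := hτnorm z fun j => by rw [← hwτ, hwnorm, ContinuousMap.eval_apply]
  have hj := f.ind_apply z hz1
  obtain ⟨c, hc, hcz⟩ := hw1 (f.ind z hz1) ⟨z, (hf _ (subset_tsupport _ (by simp [hj]))).1⟩ hj
  exact ⟨_, _, hz1, c, hc, by rw [hcz, hwτ]⟩

end Deformation

section UnderlyingPairs

variable {ι E : Type*}

/-- The set of pairs of configurations in `U`, viewed as pairs of arbitrary families of points. -/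
def underlyingPairs (U : Set (OrderedConf ι E × OrderedConf ι E)) : Set ((ι → E) × (ι → E)) :=
  Prod.map Subtype.val Subtype.val '' U

variable [TopologicalSpace E]

theorem isOpen_underlyingPairs [Finite ι] [T2Space E] {U : Set (OrderedConf ι E × OrderedConf ι E)}
    (hU : IsOpen U) : IsOpen (underlyingPairs U) :=
  (isOpen_setOf_injective.isOpenEmbedding_subtypeVal.prodMap
    isOpen_setOf_injective.isOpenEmbedding_subtypeVal).isOpenMap U hU

theorem exists_homotopy_sub [AddGroup E] [ContinuousSub E] {Z : Type*} [TopologicalSpace Z]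
    (F : C(Z, (ι → E) × (ι → E))) {U : Set (OrderedConf ι E × OrderedConf ι E)}
    (hU : HasMotionPlanningSection (OrderedConf ι E) U) {p q : ι} (hpq : p ≠ q) :
    ∃ H : C(F ⁻¹' underlyingPairs U × I, E), (∀ u, H u ≠ 0) ∧
      ∀ z, H (z, 0) = (F z).1 p - (F z).1 q ∧ H (z, 1) = (F z).2 p - (F z).2 q := by
  obtain ⟨s, hs⟩ := hU
  have hemb : Topology.IsEmbedding (Prod.map Subtype.val Subtype.val :
      OrderedConf ι E × OrderedConf ι E → (ι → E) × (ι → E)) :=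
    Topology.IsEmbedding.subtypeVal.prodMap Topology.IsEmbedding.subtypeVal
  let e : U ≃ₜ underlyingPairs U := hemb.homeomorphImage U
  let φ : C(F ⁻¹' underlyingPairs U, U) := (e.symm : C(_, U)).comp (F.restrictPreimage _)
  have hφ : ∀ z, (φ z).1.1.1 = (F z).1 ∧ (φ z).1.2.1 = (F z).2 := fun z =>
    Prod.ext_iff.1 (congrArg Subtype.val (e.apply_symm_apply (F.restrictPreimage _ z)))
  have hpath : Continuous fun u : F ⁻¹' underlyingPairs U × I => (s (φ u.1) u.2).1 :=
    continuous_subtype_val.comp (by fun_prop)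
  refine ⟨⟨fun u => (s (φ u.1) u.2).1 p - (s (φ u.1) u.2).1 q,
    ((continuous_apply p).comp hpath).sub ((continuous_apply q).comp hpath)⟩,
    fun u => sub_ne_zero.2 ((s _ _).2.ne hpq), fun z => ?_⟩
  simp only [ContinuousMap.coe_mk, hs, hφ, and_self]

end UnderlyingPairs

section Orbit

/-- The configuration with its first point at the origin and the `i`-th further point at
`a i / (i + 1)`, so that for unit vectors `a i` the points orbit the origin at distinct radii. -/
noncomputable def orbit {k : ℕ} (a : Fin k → E) : Fin (k + 1) → E :=
  Fin.cons 0 fun i => ((i : ℕ) + 1 : ℝ)⁻¹ • a i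

variable {k : ℕ}

@[simp] theorem orbit_zero (a : Fin k → E) : orbit a 0 = 0 := rfl

@[simp] theorem orbit_succ (a : Fin k → E) (i : Fin k) :
    orbit a i.succ = ((i : ℕ) + 1 : ℝ)⁻¹ • a i := rfl

@[fun_prop] theorem continuous_orbit : Continuous (orbit : (Fin k → E) → Fin (k + 1) → E) :=
  continuous_pi (Fin.cases continuous_const fun i => (continuous_apply i).const_smul _)

-- The point `orbit a 0 = 0` is covered because `0⁻¹ = 0`.
theorem norm_orbit {a : Fin k → E} (ha : ∀ i, ‖a i‖ = 1) (i : Fin (k + 1)) :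
    ‖orbit a i‖ = ((i : ℕ) : ℝ)⁻¹ := by
  cases i using Fin.cases with
  | zero => simp
  | succ i =>
    rw [orbit_succ, norm_smul, ha, mul_one, Fin.val_succ, Nat.cast_succ]
    exact Real.norm_of_nonneg (by positivity)

theorem orbit_injective {a : Fin k → E} (ha : ∀ i, ‖a i‖ = 1) : Function.Injective (orbit a) := by
  intro i j hij
  have hnorm := congrArg norm hij
  rw [norm_orbit ha, norm_orbit ha, inv_inj, Nat.cast_inj] at hnorm
  exact Fin.ext hnorm

theorem orbit_sub_orbit_one_ne_smul {a : Fin (k + 1) → E} (ha : ∀ i, ‖a i‖ = 1) {r : ℝ}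
    (hr : 0 < r) (i : Fin (k + 2)) : orbit a i - orbit a 1 ≠ r • a 0 := by
  intro h
  have hone : orbit a 1 = a 0 := by simpa using orbit_succ a 0
  have hi : orbit a i = (r + 1) • a 0 := by rw [add_smul, one_smul, ← h, hone, sub_add_cancel]
  have hnorm : ((i : ℕ) : ℝ)⁻¹ = r + 1 := by
    rw [← norm_orbit ha, hi, norm_smul, ha, mul_one, Real.norm_of_nonneg (by positivity)]
  linarith [Nat.cast_inv_le_one (α := ℝ) (i : ℕ)]

end Orbit

section NoCover

theorem norm_cons_eq_one {F : Type*} [Norm F] {k : ℕ} {v : F} (hv : ‖v‖ = 1) {a : Fin k → F}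
    (ha : ∀ i, ‖a i‖ = 1) : ∀ i, ‖(Fin.cons v a : Fin (k + 1) → F) i‖ = 1 :=
  Fin.cases hv ha

variable {k : ℕ} (c : E)

/-- A pair of configurations of `k + 2` points: in the first, the other points orbit the first
point in the directions `z (.inl i)`; in the second, the first point stays in direction `-c` from
the second one, which the remaining points orbit in the directions `z (.inr i)`. -/
noncomputable def orbitPair :
    C(Fin (k + 1) ⊕ Fin k → E, (Fin (k + 2) → E) × (Fin (k + 2) → E)) where
  toFun z := (orbit fun i => z (.inl i), orbit (Fin.cons (-c) fun i => z (.inr i)) ∘ Equiv.swap 0 1)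

/-- Prescribed directions which the differences of points of `orbitPair c z` avoid at the end of
a motion. The factor `(max 1 ‖z (.inl 0)‖)⁻¹` only keeps the target bounded: it is `1` on unit
vectors. -/
noncomputable def orbitTarget (z : Fin (k + 1) ⊕ Fin k → E) : Fin (k + 1) ⊕ Fin k → E :=
  Sum.elim (fun _ => -c) fun _ => (max 1 ‖z (.inl 0)‖)⁻¹ • z (.inl 0)

theorem continuous_orbitTarget : Continuous (orbitTarget c : (Fin (k + 1) ⊕ Fin k → E) → _) := by
  have h0 : ∀ z : Fin (k + 1) ⊕ Fin k → E, max 1 ‖z (.inl 0)‖ ≠ 0 := fun z => by positivity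
  refine continuous_pi (Sum.rec (fun _ => continuous_const) fun _ => ?_)
  simp only [orbitTarget, Sum.elim_inr]
  fun_prop (disch := exact h0)

variable {c}

theorem orbitPair_injective (hc : ‖c‖ = 1) {z : Fin (k + 1) ⊕ Fin k → E} (hz : ∀ j, ‖z j‖ = 1) :
    Function.Injective (orbitPair c z).1 ∧ Function.Injective (orbitPair c z).2 :=
  ⟨orbit_injective fun i => hz (.inl i),
    (orbit_injective (norm_cons_eq_one ((norm_neg c).trans hc) fun i => hz (.inr i))).comp
      (Equiv.swap 0 1).injective⟩

theorem norm_eq_one_of_norm_orbitTarget_eq (hc : ‖c‖ = 1) {z : Fin (k + 1) ⊕ Fin k → E}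
    (h : ∀ j, ‖orbitTarget c z j‖ = ‖z j‖) (j) : ‖z j‖ = 1 := by
  have hinl : ∀ i, ‖z (.inl i)‖ = 1 := fun i => by simpa [orbitTarget, hc] using (h (.inl i)).symm
  rcases j with i | i
  · exact hinl i
  · simpa [orbitTarget, hinl] using (h (.inr i)).symm

theorem norm_orbitTarget_le (hc : ‖c‖ = 1) (z : Fin (k + 1) ⊕ Fin k → E) (j) :
    ‖orbitTarget c z j‖ ≤ 1 := by
  rcases j with i | i
  · simp [orbitTarget, hc]
  · rw [orbitTarget, Sum.elim_inr, norm_smul, norm_inv, Real.norm_of_nonneg (by positivity)]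
    exact inv_mul_le_one_of_le₀ (le_max_right _ _) (by positivity)

theorem exists_deformation_orbitPair (hc : ‖c‖ = 1)
    {U : Set (OrderedConf (Fin (k + 2)) E × OrderedConf (Fin (k + 2)) E)}
    (hU : HasMotionPlanningSection (OrderedConf (Fin (k + 2)) E) U) (j : Fin (k + 1) ⊕ Fin k) :
    ∃ H : C(orbitPair c ⁻¹' underlyingPairs U × I, E), (∀ u, H u ≠ 0) ∧
      (∀ z, ∃ r > (0 : ℝ), H (z, 0) = r • z.1 j) ∧
      ∀ z, (∀ i, ‖z.1 i‖ = 1) → ∀ r > (0 : ℝ), H (z, 1) ≠ r • orbitTarget c z.1 j := by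
  rcases j with i | i
  · obtain ⟨H, hH, hends⟩ := exists_homotopy_sub (orbitPair c) hU (Fin.succ_ne_zero i)
    refine ⟨H, hH, fun z => ⟨((i : ℕ) + 1 : ℝ)⁻¹, by positivity, ?_⟩, fun z hz r hr => ?_⟩
    · rw [(hends z).1]
      simp [orbitPair]
    · rw [(hends z).2]
      simpa [orbitPair, orbitTarget] using orbit_sub_orbit_one_ne_smul
        (norm_cons_eq_one ((norm_neg c).trans hc) fun i => hz (.inr i)) hr (Equiv.swap 0 1 i.succ)
  · have hne : i.succ.succ ≠ 1 := fun h => Fin.succ_ne_zero i (Fin.succ_injective _ h)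
    obtain ⟨H, hH, hends⟩ := exists_homotopy_sub (orbitPair c) hU hne
    refine ⟨H.comp (.prodMap (.id _) ⟨σ, unitInterval.continuous_symm⟩), fun u => hH _,
      fun z => ⟨((i : ℕ) + 1 + 1 : ℝ)⁻¹, by positivity, ?_⟩, fun z hz r hr => ?_⟩
    · have hswap : Equiv.swap 0 1 i.succ.succ = i.succ.succ :=
        Equiv.swap_apply_of_ne_of_ne (Fin.succ_ne_zero _) hne
      change H (z, σ 0) = _
      rw [unitInterval.symm_zero, (hends z).2]
      simp [orbitPair, hswap]
    · change H (z, σ 1) ≠ _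
      rw [unitInterval.symm_one, (hends z).1]
      simpa [orbitPair, orbitTarget, hz] using
        orbit_sub_orbit_one_ne_smul (fun i => hz (.inl i)) hr i.succ.succ

theorem not_hasTCCover_orderedConf [Nontrivial E] [FiniteDimensional ℝ E] (k : ℕ) :
    ¬ HasTCCover (OrderedConf (Fin (k + 2)) E) (2 * k + 1) := by
  rintro ⟨U, hU, hcov, hs⟩
  obtain ⟨c, hc⟩ := exists_norm_eq E zero_le_one
  let e : Fin (k + 1) ⊕ Fin k ≃ Fin (2 * k + 1) := finSumFinEquiv.trans (finCongr (by ring))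
  choose H hH hstart hend using fun j => exists_deformation_orbitPair hc (hs (e j)) j
  have hcov' : {z | ∀ j, ‖z j‖ = 1} ⊆ ⋃ j, orbitPair c ⁻¹' underlyingPairs (U (e j)) := by
    intro z hz
    obtain ⟨hx, hy⟩ := orbitPair_injective hc hz
    obtain ⟨i, hi⟩ := mem_iUnion.1 (hcov.ge (mem_univ (⟨_, hx⟩, ⟨_, hy⟩)))
    exact mem_iUnion.2 ⟨e.symm i, _, by rwa [e.apply_symm_apply], rfl⟩
  obtain ⟨j, z, hz, r, hr, hzr⟩ := exists_homotopy_end_eq_pos_smul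
    (fun j => (isOpen_underlyingPairs (hU (e j))).preimage (orbitPair c).continuous) hcov'
    hH hstart (continuous_orbitTarget c) (norm_orbitTarget_le hc)
    fun z => norm_eq_one_of_norm_orbitTarget_eq hc
  exact hend j z hz r hr hzr

end NoCover

end LowerBound

section MotionPlanning

open Set

variable {X : Type*} [TopologicalSpace X]

theorem HasMotionPlanningSection.mono {U V : Set (X × X)} (hV : HasMotionPlanningSection X V)
    (h : U ⊆ V) : HasMotionPlanningSection X U := by
  obtain ⟨s, hs⟩ := hV
  exact ⟨s.comp (ContinuousMap.inclusion h), fun p => hs (inclusion h p)⟩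

theorem hasMotionPlanningSection_empty : HasMotionPlanningSection X ∅ :=
  ⟨⟨fun p => p.2.elim, continuous_of_const fun p => p.2.elim⟩, fun p => p.2.elim⟩

theorem HasMotionPlanningSection.preimage {Y : Type*} [TopologicalSpace Y] {f : C(Y, X)}
    {g : C(X, Y)} (hgf : Function.LeftInverse g f) {U : Set (X × X)}
    (hU : HasMotionPlanningSection X U) : HasMotionPlanningSection Y (Prod.map f f ⁻¹' U) := by
  obtain ⟨s, hs⟩ := hU
  refine ⟨.comp ⟨fun γ => g.comp γ, g.continuous_postcomp⟩
    (s.comp ((f.prodMap f).restrictPreimage U)), fun p => ⟨?_, ?_⟩⟩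
  · exact (congrArg g (hs _).1).trans (hgf _)
  · exact (congrArg g (hs _).2).trans (hgf _)

theorem hasMotionPlanningSection_of_homotopic {U : Set (X × X)}
    (h : (ContinuousMap.fst.restrict U).Homotopic (ContinuousMap.snd.restrict U)) :
    HasMotionPlanningSection X U := by
  obtain ⟨H⟩ := h
  exact ⟨(H.toContinuousMap.comp .prodSwap).curry, fun p => ⟨H.apply_zero p, H.apply_one p⟩⟩

theorem hasMotionPlanningSection_prod {V W : Set X} {a : X}
    (hV : ((ContinuousMap.id X).restrict V).Homotopic (.const V a))
    (hW : ((ContinuousMap.id X).restrict W).Homotopic (.const W a)) :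
    HasMotionPlanningSection X (V ×ˢ W) := by
  let v : C(V ×ˢ W, V) := ⟨fun p => ⟨p.1.1, p.2.1⟩, by fun_prop⟩
  let w : C(V ×ˢ W, W) := ⟨fun p => ⟨p.1.2, p.2.2⟩, by fun_prop⟩
  exact hasMotionPlanningSection_of_homotopic
    ((hV.comp (.refl v)).trans (hW.comp (.refl w)).symm)

theorem HasMotionPlanningSection.iUnion {ι : Type*} {O : ι → Set (X × X)}
    (h : ∀ i, HasMotionPlanningSection X (O i)) (hO : ∀ i, IsOpen (O i))
    (hd : Pairwise (Function.onFun Disjoint O)) : HasMotionPlanningSection X (⋃ i, O i) := by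
  choose s hs using h
  let S : ι → Set (⋃ i, O i) := fun i => Subtype.val ⁻¹' O i
  let φ : ∀ i, C(S i, PathSpace X) := fun i => (s i).comp ⟨fun q => ⟨q.1.1, q.2⟩, by fun_prop⟩
  have hφ : ∀ i j x (hi : x ∈ S i) (hj : x ∈ S j), φ i ⟨x, hi⟩ = φ j ⟨x, hj⟩ := by
    intro i j x hi hj
    obtain rfl : i = j := hd.eq (not_disjoint_iff.2 ⟨x.1, hi, hj⟩)
    rfl
  have hmem : ∀ x : ⋃ i, O i, ∃ i, x.1 ∈ O i := fun x => mem_iUnion.1 x.2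
  have hS : ∀ x, ∃ i, S i ∈ nhds x := fun x =>
    (hmem x).imp fun i hi => ((hO i).preimage continuous_subtype_val).mem_nhds hi
  refine ⟨ContinuousMap.liftCover S φ hφ hS, fun p => ?_⟩
  obtain ⟨i, hi⟩ := hmem p
  have hp : ContinuousMap.liftCover S φ hφ hS p = φ i ⟨p, hi⟩ :=
    ContinuousMap.liftCover_coe (i := i) ⟨p, hi⟩
  rw [hp]
  exact hs i ⟨p.1, hi⟩

theorem HasTCCover.mono {k l : ℕ} (h : HasTCCover X k) (hkl : k ≤ l) : HasTCCover X l := by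
  obtain ⟨U, hU, hcov, hs⟩ := h
  refine ⟨fun i => if hi : (i : ℕ) < k then U ⟨i, hi⟩ else ∅, fun i => ?_, ?_, fun i => ?_⟩
  · dsimp only
    split_ifs
    exacts [hU _, isOpen_empty]
  · refine eq_univ_of_forall fun z => ?_
    obtain ⟨i, hi⟩ := mem_iUnion.1 (hcov.ge (mem_univ z))
    exact mem_iUnion.2 ⟨Fin.castLE hkl i, by simpa using hi⟩
  · dsimp only
    split_ifs
    exacts [hs _, hasMotionPlanningSection_empty]

theorem HasTCCover.of_leftInverse {Y : Type*} [TopologicalSpace Y] {k : ℕ} (h : HasTCCover X k)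
    {f : C(Y, X)} {g : C(X, Y)} (hgf : Function.LeftInverse g f) : HasTCCover Y k := by
  obtain ⟨U, hU, hcov, hs⟩ := h
  exact ⟨fun i => Prod.map f f ⁻¹' U i, fun i => (hU i).preimage (by fun_prop),
    by rw [← preimage_iUnion, hcov, preimage_univ], fun i => (hs i).preimage hgf⟩

theorem topComplexity_eq_add_one {k : ℕ} (h : HasTCCover X (k + 1)) (h' : ¬ HasTCCover X k) :
    TopComplexity X = (k + 1 : ℕ) := by
  refine IsLeast.csInf_eq ⟨⟨k + 1, rfl, h⟩, ?_⟩
  rintro _ ⟨l, rfl, hl⟩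
  exact Nat.cast_le.2 (not_lt.1 fun hlt => h' (hl.mono (Nat.lt_succ_iff.1 hlt)))

theorem exists_pairwise_disjoint_isOpen_superset {Z ι : Type*} [TopologicalSpace Z]
    [CompletelyNormalSpace Z] [Finite ι] {S : ι → Set Z}
    (h : ∀ i j, i ≠ j → Disjoint (closure (S i)) (S j)) :
    ∃ O : ι → Set Z, (∀ i, IsOpen (O i) ∧ S i ⊆ O i) ∧ Pairwise (Function.onFun Disjoint O) :=
  Pairwise.exists_mem_filter_basis_of_disjoint
    (fun i j hij => completely_normal (h i j hij) (h j i hij.symm).symm)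
    fun i => hasBasis_nhdsSet (S i)

theorem hasTCCover_of_stratification [CompletelyNormalSpace (X × X)] {ι : Type*} [Finite ι]
    {k : ℕ} {f : X × X → ι} {V : ι → Set (X × X)} {level : ι → ℕ} (hV : ∀ i, IsOpen (V i))
    (hsec : ∀ i, HasMotionPlanningSection X (V i)) (hfV : ∀ z, z ∈ V (f z))
    (hlevel : ∀ z, level (f z) < k)
    (hsep : ∀ z w, z ∈ V (f w) → level (f z) = level (f w) → f z = f w) : HasTCCover X k := by
  have hdisj : ∀ i j, level i = level j → i ≠ j → Disjoint (closure (f ⁻¹' {i})) (f ⁻¹' {j}) := by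
    refine fun i j hij hne => disjoint_right.2 ?_
    rintro w rfl hw
    obtain ⟨z, hz, rfl⟩ := mem_closure_iff.1 hw _ (hV _) (hfV w)
    exact hne (hsep z w hz hij)
  choose O hO hOdisj using fun l : Fin k => exists_pairwise_disjoint_isOpen_superset
    (S := fun i : {i // level i = l} => f ⁻¹' {i.1})
    fun i j hij => hdisj i j (i.2.trans j.2.symm) (Subtype.coe_ne_coe.2 hij)
  refine ⟨fun l => ⋃ i, O l i ∩ V i, fun l => isOpen_iUnion fun i => (hO l i).1.inter (hV i),
    eq_univ_of_forall fun z => mem_iUnion.2 ⟨⟨level (f z), hlevel z⟩, ?_⟩, fun l => ?_⟩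
  · exact mem_iUnion.2 ⟨⟨f z, rfl⟩, (hO _ _).2 rfl, hfV z⟩
  · exact .iUnion (fun i => (hsec i).mono inter_subset_right)
      (fun i => (hO l i).1.inter (hV i)) fun i j hij =>
      (hOdisj l hij).mono inter_subset_left inter_subset_left

end MotionPlanning

section UpperBound

open Set

theorem exists_injective_of_lt_imp_lt {ι : Type*} [Countable ι] (h : ι → ℝ) :
    ∃ H : ι → ℝ, Function.Injective H ∧ ∀ i j, h i < h j → H i < H j := by
  obtain ⟨v, hv⟩ := exists_injective_nat ι
  let g : ι → ℝ ×ₗ ℕ := fun i => toLex (h i, v i)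
  have hg : Function.Injective g := fun i j hij => hv (Prod.ext_iff.1 (toLex.injective hij)).2
  let _ := LinearOrder.lift' g hg
  obtain ⟨H⟩ := Order.embedding_from_countable_to_dense ι ℝ
  exact ⟨H, H.injective, fun i j hij =>
    H.lt_iff_lt.2 (show g i < g j from Prod.Lex.toLex_lt_toLex.2 (.inl hij))⟩

section VerticalOrder

variable {ι F α : Type*} [LinearOrder α] {x y : ι → F × α}

/-- The relation that `x i` lies vertically below `x j`, where the last factor of `F × α` is thought
of as the height. -/
def verticalOrder (x : ι → F × α) (i j : ι) : Prop :=
  (x i).1 = (x j).1 ∧ (x i).2 < (x j).2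

theorem verticalOrder_or_verticalOrder (hx : Function.Injective x) {i j : ι} (hij : i ≠ j)
    (h : (x i).1 = (x j).1) : verticalOrder x i j ∨ verticalOrder x j i :=
  (lt_or_gt_of_ne fun h' => hij (hx (Prod.ext h h'))).imp (.intro h) (.intro h.symm)

/-- The elements which are not minimal for the relation `R`. For a vertical order, these are all the
points but the lowest one on each vertical line. -/
def nonminimal (R : ι → ι → Prop) : Set ι :=
  {j | ∃ i, R i j}

theorem nonminimal_mono {R S : ι → ι → Prop} (h : R ≤ S) : nonminimal R ⊆ nonminimal S :=
  fun j => Exists.imp fun i => h i j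

variable [Finite ι]

theorem exists_fst_eq_notMem_nonminimal (x : ι → F × α) (i : ι) :
    ∃ j, (x j).1 = (x i).1 ∧ j ∉ nonminimal (verticalOrder x) := by
  obtain ⟨j, hj, hmin⟩ := exists_min_image {j | (x j).1 = (x i).1} (fun j => (x j).2)
    (toFinite _) ⟨i, rfl⟩
  exact ⟨j, hj, fun ⟨l, hl⟩ => (hmin l (hl.1.trans hj)).not_gt hl.2⟩

theorem ncard_nonminimal_verticalOrder_lt [Nonempty ι] (x : ι → F × α) :
    (nonminimal (verticalOrder x)).ncard < Nat.card ι := by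
  obtain ⟨j, -, hj⟩ := exists_fst_eq_notMem_nonminimal x (Classical.arbitrary ι)
  exact ncard_lt_card fun h => hj (h ▸ mem_univ j)

theorem verticalOrder_eq_of_le (hx : Function.Injective x) (hy : Function.Injective y)
    (h : verticalOrder x ≤ verticalOrder y) (hcard : (nonminimal (verticalOrder y)).ncard ≤
      (nonminimal (verticalOrder x)).ncard) : verticalOrder x = verticalOrder y := by
  have hmin := eq_of_subset_of_ncard_le (nonminimal_mono h) hcard
  have hfst : ∀ i j, (x i).1 = (x j).1 → (y i).1 = (y j).1 := by
    intro i j hij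
    rcases eq_or_ne i j with rfl | hne
    · rfl
    · exact (verticalOrder_or_verticalOrder hx hne hij).elim (fun hl => (h _ _ hl).1)
        fun hl => (h _ _ hl).1.symm
  refine le_antisymm h fun i j hij => ?_
  obtain ⟨a, hai, ha⟩ := exists_fst_eq_notMem_nonminimal x i
  obtain ⟨b, hbj, hb⟩ := exists_fst_eq_notMem_nonminimal x j
  rw [hmin] at ha hb
  have hab : a = b := by
    by_contra hne
    exact (verticalOrder_or_verticalOrder hy hne (((hfst a i hai).trans hij.1).trans
      (hfst b j hbj).symm)).elim (fun hl => hb ⟨a, hl⟩) fun hl => ha ⟨b, hl⟩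
  have hne : i ≠ j := fun e => hij.2.ne (congrArg (fun i => (y i).2) e)
  refine (verticalOrder_or_verticalOrder hx hne (hai.symm.trans (hab ▸ hbj))).resolve_right
    fun hji => ?_
  exact lt_asymm hij.2 (h j i hji).2

end VerticalOrder

section VerticalNhd

variable {ι F : Type*}

/-- An open set of configurations whose vertical order is contained in `R`; it contains the
configurations with vertical order `R`. -/
def verticalNhd (R : ι → ι → Prop) : Set (OrderedConf ι (F × ℝ)) :=
  {x | ∀ i j, (R i j → (x.1 i).2 < (x.1 j).2) ∧
    ((x.1 i).1 = (x.1 j).1 → i = j ∨ R i j ∨ R j i)}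

theorem mem_verticalNhd_verticalOrder (x : OrderedConf ι (F × ℝ)) :
    x ∈ verticalNhd (verticalOrder x.1) := fun _ _ =>
  ⟨And.right, fun h => or_iff_not_imp_left.2 fun hij => verticalOrder_or_verticalOrder x.2 hij h⟩

theorem verticalOrder_le_of_mem_verticalNhd {R : ι → ι → Prop} {x : OrderedConf ι (F × ℝ)}
    (hx : x ∈ verticalNhd R) : verticalOrder x.1 ≤ R := by
  intro i j h
  rcases (hx i j).2 h.1 with rfl | hij | hji
  · exact (lt_irrefl _ h.2).elim
  · exact hij
  · exact (lt_asymm h.2 ((hx j i).1 hji)).elim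

theorem isOpen_verticalNhd [TopologicalSpace F] [T2Space F] [Finite ι] (R : ι → ι → Prop) :
    IsOpen (verticalNhd R : Set (OrderedConf ι (F × ℝ))) := by
  have hc : ∀ i, Continuous fun x : OrderedConf ι (F × ℝ) => x.1 i := fun i =>
    (continuous_apply i).comp continuous_subtype_val
  simp only [verticalNhd, ofPred_forall, ofPred_and]
  refine isOpen_iInter_of_finite fun i => isOpen_iInter_of_finite fun j => .inter ?_ ?_
  · exact isOpen_iInter_of_finite fun _ => isOpen_lt (hc i).snd (hc j).snd
  · simp only [imp_iff_not_or]
    exact (isOpen_ne_fun (hc i).fst (hc j).fst).union isOpen_const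

end VerticalNhd

theorem homotopic_of_lineMap_injective {Y ι E : Type*} [TopologicalSpace Y] [AddCommGroup E]
    [Module ℝ E] [TopologicalSpace E] [IsTopologicalAddGroup E] [ContinuousSMul ℝ E]
    {f g : C(Y, OrderedConf ι E)}
    (h : ∀ y, ∀ t ∈ Ioo (0 : ℝ) 1, Function.Injective (AffineMap.lineMap (f y).1 (g y).1 t)) :
    f.Homotopic g := by
  have hinj : ∀ y, ∀ t ∈ Icc (0 : ℝ) 1,
      Function.Injective (AffineMap.lineMap (f y).1 (g y).1 t) := by
    intro y t ht
    rcases eq_endpoints_or_mem_Ioo_of_mem_Icc ht with rfl | rfl | ht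
    · simpa using (f y).2
    · simpa using (g y).2
    · exact h y t ht
  exact ⟨⟨⟨fun q => ⟨AffineMap.lineMap (f q.2).1 (g q.2).1 (q.1 : ℝ), hinj q.2 q.1 q.1.2⟩,
    Continuous.subtype_mk (.lineMap (by fun_prop) (by fun_prop) (by fun_prop)) _⟩,
    fun y => Subtype.ext (by simp), fun y => Subtype.ext (by simp)⟩⟩

section Contraction

variable {ι F : Type*} [AddCommGroup F] [Module ℝ F] [TopologicalSpace F]
  [IsTopologicalAddGroup F] [ContinuousSMul ℝ F]

/-- The map of configurations that moves the `i`-th point vertically to the height `H i`. -/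
def setHeights {H : ι → ℝ} (hH : Function.Injective H) :
    C(OrderedConf ι (F × ℝ), OrderedConf ι (F × ℝ)) where
  toFun x := ⟨fun i => ((x.1 i).1, H i), fun _ _ h => hH (congrArg Prod.snd h)⟩
  continuous_toFun := Continuous.subtype_mk (continuous_pi fun i =>
    ((continuous_apply i).comp continuous_subtype_val).fst.prodMk continuous_const) _

theorem homotopic_setHeights {R : ι → ι → Prop} {H : ι → ℝ} (hH : Function.Injective H)
    (hRH : ∀ i j, R i j → H i < H j) :
    ((ContinuousMap.id (OrderedConf ι (F × ℝ))).restrict (verticalNhd R)).Homotopic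
      ((setHeights hH).restrict (verticalNhd R)) := by
  refine homotopic_of_lineMap_injective fun x t ht i j hij => ?_
  simp only [AffineMap.pi_lineMap_apply, Prod.ext_iff, AffineMap.fst_lineMap,
    AffineMap.snd_lineMap] at hij
  obtain ⟨hfst, hsnd⟩ := hij
  have hlt : ∀ i j, R i j → AffineMap.lineMap (x.1.1 i).2 (H i) t <
      AffineMap.lineMap (x.1.1 j).2 (H j) t := fun i j h =>
    lineMap_strict_mono_endpoints ((x.2 i j).1 h) (hRH i j h) ht.1.le ht.2.le
  have hx : (x.1.1 i).1 = (x.1.1 j).1 := by simpa [setHeights] using hfst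
  rcases (x.2 i j).2 hx with h | h | h
  · exact h
  · exact ((hlt i j h).ne hsnd).elim
  · exact ((hlt j i h).ne' hsnd).elim

theorem setHeights_homotopic_const {H : ι → ℝ} (hH : Function.Injective H)
    {a : OrderedConf ι (F × ℝ)} (ha : ∀ i, (a.1 i).2 = 0) :
    (setHeights hH).Homotopic (.const _ a) := by
  refine homotopic_of_lineMap_injective fun x t ht i j hij => hH ?_
  have hsnd := congrArg Prod.snd hij
  have hne : 1 - t ≠ 0 := sub_ne_zero.2 ht.2.ne'
  simpa [setHeights, AffineMap.lineMap_apply_module, ha, hne] using hsnd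

theorem verticalNhd_homotopic_const [Countable ι] (R : ι → ι → Prop)
    {a : OrderedConf ι (F × ℝ)} (ha : ∀ i, (a.1 i).2 = 0) :
    ((ContinuousMap.id _).restrict (verticalNhd R)).Homotopic (.const _ a) := by
  rcases isEmpty_or_nonempty (verticalNhd R : Set (OrderedConf ι (F × ℝ))) with h | ⟨⟨x, hx⟩⟩
  · rw [Subsingleton.elim ((ContinuousMap.id _).restrict (verticalNhd R)) (.const _ a)]
  · obtain ⟨H, hH, hxH⟩ := exists_injective_of_lt_imp_lt fun i => (x.1 i).2
    exact (homotopic_setHeights hH fun i j hij => hxH i j ((hx i j).1 hij)).trans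
      ((setHeights_homotopic_const hH ha).comp (.refl ((ContinuousMap.id _).restrict _)))

end Contraction

theorem exists_orderedConf_snd_eq_zero {ι F : Type*} [Countable ι] [AddCommGroup F] [Module ℝ F]
    [Nontrivial F] :
    ∃ a : OrderedConf ι (F × ℝ), ∀ i, (a.1 i).2 = 0 := by
  obtain ⟨v, hv⟩ := exists_injective_nat ι
  obtain ⟨q, hq⟩ := exists_ne (0 : F)
  refine ⟨⟨fun i => ((v i : ℝ) • q, 0), fun i j hij => hv ?_⟩, fun i => rfl⟩
  exact Nat.cast_injective (smul_left_injective ℝ hq (congrArg Prod.fst hij))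

theorem hasTCCover_orderedConf_prod {ι F : Type*} [Finite ι] [Nonempty ι] [NormedAddCommGroup F]
    [NormedSpace ℝ F] [Nontrivial F] :
    HasTCCover (OrderedConf ι (F × ℝ)) (2 * Nat.card ι - 1) := by
  have := Fintype.ofFinite ι
  obtain ⟨a, ha⟩ := exists_orderedConf_snd_eq_zero (ι := ι) (F := F)
  refine hasTCCover_of_stratification (f := Prod.map (verticalOrder ·.1) (verticalOrder ·.1))
    (V := fun R => verticalNhd R.1 ×ˢ verticalNhd R.2)
    (level := fun R => (nonminimal R.1).ncard + (nonminimal R.2).ncard)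
    (fun R => (isOpen_verticalNhd R.1).prod (isOpen_verticalNhd R.2))
    (fun R => hasMotionPlanningSection_prod (verticalNhd_homotopic_const R.1 ha)
      (verticalNhd_homotopic_const R.2 ha))
    (fun z => ⟨mem_verticalNhd_verticalOrder z.1, mem_verticalNhd_verticalOrder z.2⟩)
    (fun z => ?_) fun z w hzw hl => ?_
  · have h1 := ncard_nonminimal_verticalOrder_lt z.1.1
    have h2 := ncard_nonminimal_verticalOrder_lt z.2.1
    dsimp only [Prod.map]
    omega
  · have hle1 := verticalOrder_le_of_mem_verticalNhd hzw.1
    have hle2 := verticalOrder_le_of_mem_verticalNhd hzw.2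
    have hcard1 := ncard_le_ncard (nonminimal_mono hle1)
    have hcard2 := ncard_le_ncard (nonminimal_mono hle2)
    dsimp only [Prod.map] at hl hcard1 hcard2
    exact Prod.ext (verticalOrder_eq_of_le z.1.2 w.1.2 hle1 (by omega))
      (verticalOrder_eq_of_le z.2.2 w.2.2 hle2 (by omega))

/-- The map of configuration spaces induced by an injective continuous map. -/
def OrderedConf.map {ι E F : Type*} [TopologicalSpace E] [TopologicalSpace F] {f : E → F}
    (hf : Continuous f) (hinj : Function.Injective f) : C(OrderedConf ι E, OrderedConf ι F) where
  toFun x := ⟨f ∘ x.1, hinj.comp x.2⟩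
  continuous_toFun := Continuous.subtype_mk (continuous_pi fun i =>
    hf.comp ((continuous_apply i).comp continuous_subtype_val)) _

theorem hasTCCover_orderedConf {ι E : Type*} [Finite ι] [Nonempty ι] [NormedAddCommGroup E]
    [NormedSpace ℝ E] [FiniteDimensional ℝ E] (hE : 2 ≤ Module.finrank ℝ E) :
    HasTCCover (OrderedConf ι E) (2 * Nat.card ι - 1) := by
  obtain ⟨d, hd⟩ := Nat.exists_eq_add_of_le' hE
  let e : E ≃L[ℝ] (Fin (d + 1) → ℝ) × ℝ := .ofFinrankEq (by simpa using hd)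
  exact hasTCCover_orderedConf_prod.of_leftInverse (f := OrderedConf.map e.continuous e.injective)
    (g := OrderedConf.map e.symm.continuous e.symm.injective)
    fun x => Subtype.ext (funext fun i => e.symm_apply_apply (x.1 i))

end UpperBound

theorem tc_config_space_even_general {E : Type*} [NormedAddCommGroup E] [NormedSpace ℝ E]
    [FiniteDimensional ℝ E] (hE : 2 ≤ Module.finrank ℝ E) {n : ℕ} (hn : 2 ≤ n) :
    TopComplexity (OrderedConf (Fin n) E) = (2 * n - 2 : ℕ) ∨
      TopComplexity (OrderedConf (Fin n) E) = (2 * n - 1 : ℕ) := by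
  obtain ⟨k, rfl⟩ := Nat.exists_eq_add_of_le' hn
  have : Nontrivial E := Module.nontrivial_of_finrank_pos (R := ℝ) (by omega)
  have hlower := not_hasTCCover_orderedConf (E := E) k
  have hupper : HasTCCover (OrderedConf (Fin (k + 2)) E) (2 * k + 1 + 1 + 1) := by
    simpa [mul_add] using hasTCCover_orderedConf (ι := Fin (k + 2)) hE
  have hcard : 2 * (k + 2) - 1 = 2 * k + 1 + 1 + 1 ∧ 2 * (k + 2) - 2 = 2 * k + 1 + 1 := by omega
  rw [hcard.1, hcard.2]
  by_cases h : HasTCCover (OrderedConf (Fin (k + 2)) E) (2 * k + 1 + 1)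
  · exact .inl (topComplexity_eq_add_one h hlower)
  · exact .inr (topComplexity_eq_add_one hupper h)

/-- for every even `m ≥ 2` and `n ≥ 2`, the topological complexity of
`C_n(ℝ^m)` equals either `2n - 2` or `2n - 1`. -/
theorem tc_config_space_even (m n : ℕ) (hm : Even m) (hm2 : 2 ≤ m) (hn : 2 ≤ n) :
    TopComplexity (ConfSpace n m) = (2 * n - 2 : ℕ) ∨
      TopComplexity (ConfSpace n m) = (2 * n - 1 : ℕ) :=
  tc_config_space_even_general (by simpa using hm2) hn
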